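/- Consistent extension lemma: let Γ be a consistent (possibly infinite) set of moded propositions and P a moded proposition. Then Γ ∪ {P} and Γ ∪ {P~} are not both inconsistent. -/

import Mathlib

/-!
Write `∘P` for the classical version of `P` (`∘A⁺ = ∘A⊕ = A⊕`, `∘A⁻ = ∘A⊖ = A⊖`).

For classical `P` the claim is immediate: if `Γ, A⊕` is inconsistent it proves `A⁻`, so `Γ ⊢ A⊖` by
(IC⁻); dually `Γ ⊢ A⊕`; and `A⊕`, `A⊖` together yield `A⁺` and `A⁻`, hence anything.

For strong `P`, the key is that projection to the classical fragment preserves derivability: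
if `Γ ⊢ Q` and `Δ ⊢ ∘R` for every `R ∈ Γ`, then `Δ ⊢ ∘Q` (`PRK.project`), by induction on the
derivation. The elimination rules are handled by refutation: to get `A⊕` from `(A∧B)⊕`, assume `A⊖`,
whence `(A∧B)⊖`, a contradiction. Consequently, if `Γ, P` is inconsistent then so is `Γ, ∘P`,
and the strong case reduces to the classical one.
-/

/-- Pure propositions: A ::= α | A∧B | A∨B | ¬A -/
inductive PureProp : Type
  | var : ℕ → PureProp
  | conj : PureProp → PureProp → PureProp
  | disj : PureProp → PureProp → PureProp
  | neg : PureProp → PureProp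
  deriving DecidableEq

/-- Moded propositions: A⁺ (sp), A⁻ (sn), A⊕ (cp), A⊖ (cn). -/
inductive MProp : Type
  | sp : PureProp → MProp
  | sn : PureProp → MProp
  | cp : PureProp → MProp
  | cn : PureProp → MProp
  deriving DecidableEq

/-- The opposite P~: flips the sign, keeps the strength. -/
def MProp.opp : MProp → MProp
  | .sp A => .sn A
  | .sn A => .sp A
  | .cp A => .cn A
  | .cn A => .cp A

def MProp.isStrong : MProp → Prop
  | .sp _ => True
  | .sn _ => True
  | .cp _ => False
  | .cn _ => False

def MProp.isClassical : MProp → Prop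
  | .sp _ => False
  | .sn _ => False
  | .cp _ => True
  | .cn _ => True

/-- Derivability in system PRK (natural deduction), Γ a finite set of moded propositions. -/
inductive PRK : Finset MProp → MProp → Prop
  | ax {Γ : Finset MProp} {P : MProp} : P ∈ Γ → PRK Γ P
  | abs {Γ : Finset MProp} {P Q : MProp} :
      P.isStrong → PRK Γ P → PRK Γ P.opp → PRK Γ Q
  | iConjP {Γ A B} : PRK Γ (MProp.cp A) → PRK Γ (MProp.cp B) → PRK Γ (MProp.sp (PureProp.conj A B))
  | eConjP1 {Γ A B} : PRK Γ (MProp.sp (PureProp.conj A B)) → PRK Γ (MProp.cp A)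
  | eConjP2 {Γ A B} : PRK Γ (MProp.sp (PureProp.conj A B)) → PRK Γ (MProp.cp B)
  | iDisjP1 {Γ A B} : PRK Γ (MProp.cp A) → PRK Γ (MProp.sp (PureProp.disj A B))
  | iDisjP2 {Γ A B} : PRK Γ (MProp.cp B) → PRK Γ (MProp.sp (PureProp.disj A B))
  | eDisjP {Γ A B P} : PRK Γ (MProp.sp (PureProp.disj A B)) →
      PRK (insert (MProp.cp A) Γ) P → PRK (insert (MProp.cp B) Γ) P → PRK Γ P
  | iNegP {Γ A} : PRK Γ (MProp.cn A) → PRK Γ (MProp.sp (PureProp.neg A))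
  | eNegP {Γ A} : PRK Γ (MProp.sp (PureProp.neg A)) → PRK Γ (MProp.cn A)
  | icP {Γ A} : PRK (insert (MProp.cn A) Γ) (MProp.sp A) → PRK Γ (MProp.cp A)
  | ecP {Γ A} : PRK Γ (MProp.cp A) → PRK Γ (MProp.cn A) → PRK Γ (MProp.sp A)
  | iDisjN {Γ A B} : PRK Γ (MProp.cn A) → PRK Γ (MProp.cn B) → PRK Γ (MProp.sn (PureProp.disj A B))
  | eDisjN1 {Γ A B} : PRK Γ (MProp.sn (PureProp.disj A B)) → PRK Γ (MProp.cn A)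
  | eDisjN2 {Γ A B} : PRK Γ (MProp.sn (PureProp.disj A B)) → PRK Γ (MProp.cn B)
  | iConjN1 {Γ A B} : PRK Γ (MProp.cn A) → PRK Γ (MProp.sn (PureProp.conj A B))
  | iConjN2 {Γ A B} : PRK Γ (MProp.cn B) → PRK Γ (MProp.sn (PureProp.conj A B))
  | eConjN {Γ A B P} : PRK Γ (MProp.sn (PureProp.conj A B)) →
      PRK (insert (MProp.cn A) Γ) P → PRK (insert (MProp.cn B) Γ) P → PRK Γ P
  | iNegN {Γ A} : PRK Γ (MProp.cp A) → PRK Γ (MProp.sn (PureProp.neg A))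
  | eNegN {Γ A} : PRK Γ (MProp.sn (PureProp.neg A)) → PRK Γ (MProp.cp A)
  | icN {Γ A} : PRK (insert (MProp.cp A) Γ) (MProp.sn A) → PRK Γ (MProp.cn A)
  | ecN {Γ A} : PRK Γ (MProp.cn A) → PRK Γ (MProp.cp A) → PRK Γ (MProp.sn A)

/-- Derivability from a possibly infinite set of moded propositions. -/
def SDeriv (Γ : Set MProp) (P : MProp) : Prop :=
  ∃ Δ : Finset MProp, ↑Δ ⊆ Γ ∧ PRK Δ P

/-- Consistency of a possibly infinite set of moded propositions. -/
def SetConsistent (Γ : Set MProp) : Prop := ∃ P, ¬ SDeriv Γ P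

/-- The classical version of a moded proposition: same sign, classical strength. -/
def MProp.circ : MProp → MProp
  | .sp A => .cp A
  | .sn A => .cn A
  | .cp A => .cp A
  | .cn A => .cn A

theorem PRK.weaken {Γ : Finset MProp} {P : MProp} (h : PRK Γ P) :
    ∀ {Δ : Finset MProp}, Γ ⊆ Δ → PRK Δ P := by
  induction h with
  | ax h => exact fun hs => .ax (hs h)
  | abs hP _ _ ih₁ ih₂ => exact fun hs => .abs hP (ih₁ hs) (ih₂ hs)
  | iConjP _ _ ih₁ ih₂ => exact fun hs => .iConjP (ih₁ hs) (ih₂ hs)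
  | eConjP1 _ ih => exact fun hs => .eConjP1 (ih hs)
  | eConjP2 _ ih => exact fun hs => .eConjP2 (ih hs)
  | iDisjP1 _ ih => exact fun hs => .iDisjP1 (ih hs)
  | iDisjP2 _ ih => exact fun hs => .iDisjP2 (ih hs)
  | eDisjP _ _ _ ih ih₁ ih₂ =>
    exact fun hs => .eDisjP (ih hs) (ih₁ (Finset.insert_subset_insert _ hs))
      (ih₂ (Finset.insert_subset_insert _ hs))
  | iNegP _ ih => exact fun hs => .iNegP (ih hs)
  | eNegP _ ih => exact fun hs => .eNegP (ih hs)
  | icP _ ih => exact fun hs => .icP (ih (Finset.insert_subset_insert _ hs))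
  | ecP _ _ ih₁ ih₂ => exact fun hs => .ecP (ih₁ hs) (ih₂ hs)
  | iDisjN _ _ ih₁ ih₂ => exact fun hs => .iDisjN (ih₁ hs) (ih₂ hs)
  | eDisjN1 _ ih => exact fun hs => .eDisjN1 (ih hs)
  | eDisjN2 _ ih => exact fun hs => .eDisjN2 (ih hs)
  | iConjN1 _ ih => exact fun hs => .iConjN1 (ih hs)
  | iConjN2 _ ih => exact fun hs => .iConjN2 (ih hs)
  | eConjN _ _ _ ih ih₁ ih₂ =>
    exact fun hs => .eConjN (ih hs) (ih₁ (Finset.insert_subset_insert _ hs))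
      (ih₂ (Finset.insert_subset_insert _ hs))
  | iNegN _ ih => exact fun hs => .iNegN (ih hs)
  | eNegN _ ih => exact fun hs => .eNegN (ih hs)
  | icN _ ih => exact fun hs => .icN (ih (Finset.insert_subset_insert _ hs))
  | ecN _ _ ih₁ ih₂ => exact fun hs => .ecN (ih₁ hs) (ih₂ hs)

theorem PRK.weaken_insert {Γ : Finset MProp} {P : MProp} (R : MProp) (h : PRK Γ P) :
    PRK (insert R Γ) P :=
  h.weaken (Finset.subset_insert R Γ)

/-- Opposite classical propositions are contradictory, although (Abs) is restricted to strong
propositions. -/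
theorem PRK.explode {Γ : Finset MProp} {A : PureProp} (Q : MProp)
    (hp : PRK Γ (.cp A)) (hn : PRK Γ (.cn A)) : PRK Γ Q :=
  .abs (P := .sp A) trivial (.ecP hp hn) (.ecN hn hp)

theorem PRK.explode_circ {Γ : Finset MProp} {P : MProp} (Q : MProp)
    (h : PRK Γ P.circ) (hopp : PRK Γ P.circ.opp) : PRK Γ Q := by
  cases P with
  | sp A => exact h.explode Q hopp
  | sn A => exact PRK.explode Q hopp h
  | cp A => exact h.explode Q hopp
  | cn A => exact PRK.explode Q hopp h

/-- Classical propositions can be proved by refuting their opposite. -/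
theorem PRK.by_refutation {Γ : Finset MProp} {P : MProp}
    (h : ∀ Q, PRK (insert P.circ.opp Γ) Q) : PRK Γ P.circ := by
  cases P with
  | sp A => exact .icP (h _)
  | sn A => exact .icN (h _)
  | cp A => exact .icP (h _)
  | cn A => exact .icN (h _)

theorem PRK.circ_of {Γ : Finset MProp} {P : MProp} (h : PRK Γ P) : PRK Γ P.circ := by
  cases P with
  | sp A => exact .icP (h.weaken_insert _)
  | sn A => exact .icN (h.weaken_insert _)
  | cp A => exact h
  | cn A => exact h

/-- Given `A⊕`, a classical proposition follows once its opposite is shown to entail `A⁻`. -/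
theorem PRK.refute_pos {Γ : Finset MProp} {P : MProp} {A : PureProp} (h : PRK Γ (.cp A))
    (hopp : PRK (insert P.circ.opp Γ) (.sn A)) : PRK Γ P.circ :=
  .by_refutation fun Q => .explode Q (h.weaken_insert _) hopp.circ_of

/-- Dual of `PRK.refute_pos`. -/
theorem PRK.refute_neg {Γ : Finset MProp} {P : MProp} {A : PureProp} (h : PRK Γ (.cn A))
    (hopp : PRK (insert P.circ.opp Γ) (.sp A)) : PRK Γ P.circ :=
  .by_refutation fun Q => .explode Q hopp.circ_of (h.weaken_insert _)

theorem PRK.hyp {Γ : Finset MProp} {P : MProp} : PRK (insert P Γ) P :=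
  .ax (Finset.mem_insert_self _ _)

/-- Substitution premises for `PRK.project` extend under a classical assumption `S`. -/
theorem PRK.circ_insert {Γ Δ : Finset MProp} {S : MProp} (hS : S.circ = S)
    (h : ∀ R ∈ Γ, PRK Δ R.circ) : ∀ R ∈ insert S Γ, PRK (insert S Δ) R.circ := by
  intro R hR
  rcases Finset.mem_insert.1 hR with rfl | hR
  · rw [hS]; exact .hyp
  · exact (h R hR).weaken_insert _

/-- Contraposition for a classical conclusion and a positive classical assumption. -/
theorem PRK.contra_pos {Γ : Finset MProp} {P : MProp} {A : PureProp}
    (h : PRK (insert (.cp A) Γ) P.circ) : PRK (insert P.circ.opp Γ) (.cn A) :=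
  .by_refutation (P := .cn A) fun Q => .explode_circ (P := P) Q
    (h.weaken (Finset.insert_subset_insert _ (Finset.subset_insert _ _))) (hyp.weaken_insert _)

/-- Contraposition for a classical conclusion and a negative classical assumption. -/
theorem PRK.contra_neg {Γ : Finset MProp} {P : MProp} {A : PureProp}
    (h : PRK (insert (.cn A) Γ) P.circ) : PRK (insert P.circ.opp Γ) (.cp A) :=
  .by_refutation (P := .cp A) fun Q => .explode_circ (P := P) Q
    (h.weaken (Finset.insert_subset_insert _ (Finset.subset_insert _ _))) (hyp.weaken_insert _)

/-- Projection to the classical fragment preserves derivability. -/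
theorem PRK.project {Γ : Finset MProp} {Q : MProp} (h : PRK Γ Q) :
    ∀ {Δ : Finset MProp}, (∀ R ∈ Γ, PRK Δ R.circ) → PRK Δ Q.circ := by
  induction h with
  | ax h => exact fun hs => hs _ h
  | @abs _ P _ hP _ _ ih₁ ih₂ =>
    intro Δ hs
    refine .explode_circ (P := P) _ (ih₁ hs) ?_
    have := ih₂ hs
    cases P <;> exact this
  | iConjP _ _ ih₁ ih₂ => exact fun hs => (PRK.iConjP (ih₁ hs) (ih₂ hs)).circ_of
  | @eConjP1 _ A _ _ ih => exact fun hs => .refute_pos (P := .cp A) (ih hs) (.iConjN1 .hyp)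
  | @eConjP2 _ _ B _ ih => exact fun hs => .refute_pos (P := .cp B) (ih hs) (.iConjN2 .hyp)
  | iDisjP1 _ ih => exact fun hs => (PRK.iDisjP1 (ih hs)).circ_of
  | iDisjP2 _ ih => exact fun hs => (PRK.iDisjP2 (ih hs)).circ_of
  | eDisjP _ _ _ ih ih₁ ih₂ =>
    exact fun hs => .refute_pos (ih hs) (.iDisjN (.contra_pos (ih₁ (.circ_insert rfl hs)))
      (.contra_pos (ih₂ (.circ_insert rfl hs))))
  | iNegP _ ih => exact fun hs => (PRK.iNegP (ih hs)).circ_of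
  | @eNegP _ A _ ih => exact fun hs => .refute_pos (P := .cn A) (ih hs) (.iNegN .hyp)
  | icP _ ih => exact fun hs => .icP (.ecP (ih (.circ_insert rfl hs)) .hyp)
  | ecP _ _ ih₁ _ => exact fun hs => ih₁ hs
  | iDisjN _ _ ih₁ ih₂ => exact fun hs => (PRK.iDisjN (ih₁ hs) (ih₂ hs)).circ_of
  | @eDisjN1 _ A _ _ ih => exact fun hs => .refute_neg (P := .cn A) (ih hs) (.iDisjP1 .hyp)
  | @eDisjN2 _ _ B _ ih => exact fun hs => .refute_neg (P := .cn B) (ih hs) (.iDisjP2 .hyp)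
  | iConjN1 _ ih => exact fun hs => (PRK.iConjN1 (ih hs)).circ_of
  | iConjN2 _ ih => exact fun hs => (PRK.iConjN2 (ih hs)).circ_of
  | eConjN _ _ _ ih ih₁ ih₂ =>
    exact fun hs => .refute_neg (ih hs) (.iConjP (.contra_neg (ih₁ (.circ_insert rfl hs)))
      (.contra_neg (ih₂ (.circ_insert rfl hs))))
  | iNegN _ ih => exact fun hs => (PRK.iNegN (ih hs)).circ_of
  | @eNegN _ A _ ih => exact fun hs => .refute_neg (P := .cp A) (ih hs) (.iNegP .hyp)
  | icN _ ih => exact fun hs => .icN (.ecN (ih (.circ_insert rfl hs)) .hyp)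
  | ecN _ _ ih₁ _ => exact fun hs => ih₁ hs

/-- If `Γ, P` is inconsistent then a finite part of `Γ` together with the classical version of `P`
already is. -/
theorem exists_inconsistent_circ {Γ : Set MProp} {P : MProp} (h : ¬ SetConsistent (Γ ∪ {P})) :
    ∃ Δ : Finset MProp, ↑Δ ⊆ Γ ∧ ∀ Q, PRK (insert P.circ Δ) Q := by
  have hall : ∀ Q, SDeriv (Γ ∪ {P}) Q := by simpa [SetConsistent] using h
  -- Any pair of opposite propositions witnesses inconsistency.
  obtain ⟨Δ₁, hs₁, h₁⟩ := hall (.cp (.var 0))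
  obtain ⟨Δ₂, hs₂, h₂⟩ := hall (.cn (.var 0))
  refine ⟨(Δ₁ ∪ Δ₂).erase P, ?_, fun Q => ?_⟩
  · intro R hR
    obtain ⟨hne, hR⟩ := Finset.mem_erase.1 (Finset.mem_coe.1 hR)
    have : R ∈ Γ ∪ {P} := (Finset.mem_union.1 hR).elim (fun h => hs₁ h) (fun h => hs₂ h)
    exact this.resolve_right hne
  · have hs : ∀ R ∈ Δ₁ ∪ Δ₂, PRK (insert P.circ ((Δ₁ ∪ Δ₂).erase P)) R.circ := by
      intro R hR
      by_cases hRP : R = P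
      · subst hRP; exact .hyp
      · exact PRK.circ_of (.ax (Finset.mem_insert_of_mem (Finset.mem_erase.2 ⟨hRP, hR⟩)))
    exact .explode Q (h₁.project fun R hR => hs R (Finset.mem_union_left _ hR))
      (h₂.project fun R hR => hs R (Finset.mem_union_right _ hR))

/-- Consistent extension lemma: Γ ∪ {P} and Γ ∪ {P~} are not both inconsistent. -/
theorem consistent_extension (Γ : Set MProp) (P : MProp) (hc : SetConsistent Γ) :
    ¬ (¬ SetConsistent (Γ ∪ {P}) ∧ ¬ SetConsistent (Γ ∪ {P.opp})) := by
  rintro ⟨h₁, h₂⟩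
  obtain ⟨Q, hQ⟩ := hc
  obtain ⟨Δ₁, hs₁, h₁⟩ := exists_inconsistent_circ h₁
  obtain ⟨Δ₂, hs₂, h₂⟩ := exists_inconsistent_circ h₂
  have e₁ : P.opp.circ.opp = P.circ := by cases P <;> rfl
  have e₂ : P.circ.opp = P.opp.circ := by cases P <;> rfl
  refine hQ ⟨Δ₁ ∪ Δ₂, by simp [hs₁, hs₂], .explode_circ (P := P) Q ?_ ?_⟩
  · refine .by_refutation fun Q => ?_
    rw [e₂]
    exact (h₂ Q).weaken (Finset.insert_subset_insert _ Finset.subset_union_right)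
  · rw [e₂]
    refine .by_refutation fun Q => ?_
    rw [e₁]
    exact (h₁ Q).weaken (Finset.insert_subset_insert _ Finset.subset_union_left)
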